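/- Let N ≥ 1, 0 < γ < min{2, N}, and let g : [0,∞) → [0,∞) be a non-decreasing Lipschitz function with g(0) = 0. Let u₀ : ℝ^N → ℝ be a non-negative essentially bounded measurable function. Then there exists a unique non-negative function u : ℝ^N × [0,∞) → ℝ such that for every T > 0, u is essentially bounded on ℝ^N × (0,T), and for almost every (x,t) with t ∈ [0,T], u(x,t) = ∫_{ℝ^N} G_t(x−y) u₀(y) dy + ∫₀ᵗ ∫_{ℝ^N} G_{t−σ}(x−y) |y|^{−γ} g(u(y,σ)) dy dσ. -/

import Mathlib

open MeasureTheory Filter Real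

/-- The heat kernel `G_t(x) = (4πt)^{-N/2} exp(-|x|²/(4t))` on `ℝ^N`. -/
noncomputable def heatKernel (N : ℕ) (t : ℝ) (x : EuclideanSpace ℝ (Fin N)) : ℝ :=
  (4 * π * t) ^ (-(N : ℝ) / 2) * Real.exp (-‖x‖ ^ 2 / (4 * t))

/-- `u` is a non-negative mild solution of `u_t - Δu = |x|^{-γ} g(u)`,
`u(·,0) = u₀`, which is (measurable and) essentially bounded on
`ℝ^N × (0,T)` for every `T > 0`, the integral equation holding for almost
every `(x,t)` with `t ∈ (0,T]`. -/
def IsLipSolution (N : ℕ) (γ : ℝ) (g : ℝ → ℝ)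
    (u₀ : EuclideanSpace ℝ (Fin N) → ℝ)
    (u : EuclideanSpace ℝ (Fin N) → ℝ → ℝ) : Prop :=
  -- u is non-negative
  (∀ x t, 0 ≤ t → 0 ≤ u x t) ∧
  AEMeasurable (fun p : EuclideanSpace ℝ (Fin N) × ℝ => u p.1 p.2) ∧
  -- u is essentially bounded on ℝ^N × (0,T) for every T > 0
  (∀ T : ℝ, 0 < T → ∃ C : ℝ,
    ∀ᵐ p : EuclideanSpace ℝ (Fin N) × ℝ ∂volume,
      p.2 ∈ Set.Ioo 0 T → |u p.1 p.2| ≤ C) ∧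
  -- the integral equation, for a.e. (x,t) with 0 < t ≤ T
  (∀ T : ℝ, 0 < T →
    ∀ᵐ p : EuclideanSpace ℝ (Fin N) × ℝ ∂volume, p.2 ∈ Set.Ioc 0 T →
      u p.1 p.2 = (∫ y, heatKernel N p.2 (p.1 - y) * u₀ y) +
        ∫ σ in (0 : ℝ)..p.2, ∫ y,
          heatKernel N (p.2 - σ) (p.1 - y) * ‖y‖ ^ (-γ) * g (u y σ))

section Abstract

variable {P : Type*} [MeasurableSpace P] {ν : Measure P} {k : P → P → ℝ} {w : P → ℝ}
  {φ : ℝ → ℝ} {L : ℝ}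

theorem integrable_kernel_mul_comp (hk : Measurable (Function.uncurry k))
    (hk0 : ∀ p q, 0 ≤ k p q) (hki : ∀ p, Integrable (fun q => k p q * w q) ν)
    (hφ : Continuous φ) (hφL : ∀ r, |φ r| ≤ L * |r|) (hL : 0 ≤ L)
    {S : Set P} {p : P} (hS : ∀ q, q ∉ S → k p q = 0)
    {u : P → ℝ} (hu : AEMeasurable u ν) {C : ℝ} (huC : ∀ᵐ q ∂ν, q ∈ S → |u q| ≤ C * w q) :
    Integrable (fun q => k p q * φ (u q)) ν := by
  refine ((hki p).const_mul (L * C)).mono' ?_ ?_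
  · exact ((hk.comp measurable_prodMk_left).aemeasurable.mul
      (hφ.measurable.comp_aemeasurable hu)).aestronglyMeasurable
  · filter_upwards [huC] with q hq
    by_cases h : q ∈ S
    · rw [Real.norm_eq_abs, abs_mul, abs_of_nonneg (hk0 p q)]
      calc k p q * |φ (u q)| ≤ k p q * (L * (C * w q)) := by
            gcongr
            · exact hk0 p q
            · exact (hφL _).trans (by gcongr; exact hq h)
        _ = _ := by ring
    · simp [hS q h]

/-- A Volterra-type equation with a linearly bounded monotone nonlinearity is solvable when the
kernel contracts a weighted supremum norm. -/
theorem exists_solution_of_kernel_contraction [SFinite ν]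
    (hk : Measurable (Function.uncurry k))
    (hk0 : ∀ p q, 0 ≤ k p q) (hki : ∀ p, Integrable (fun q => k p q * w q) ν)
    (hkw : ∀ p, L * ∫ q, k p q * w q ∂ν ≤ w p / 2)
    (hφ : Continuous φ) (hφ0 : ∀ r, 0 ≤ φ r) (hφm : Monotone φ)
    (hφL : ∀ r, |φ r| ≤ L * |r|) (hL : 0 ≤ L)
    {h : P → ℝ} (hh : Measurable h) (hh0 : ∀ p, 0 ≤ h p) {C : ℝ} (hC : 0 ≤ C)
    (hhC : ∀ p, h p ≤ C * w p) :
    ∃ u : P → ℝ, Measurable u ∧ (∀ p, 0 ≤ u p) ∧ (∀ p, u p ≤ 2 * C * w p) ∧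
      ∀ p, u p = h p + ∫ q, k p q * φ (u q) ∂ν := by
  have hint : ∀ {f : P → ℝ}, Measurable f → (∀ p, 0 ≤ f p) → (∀ p, f p ≤ 2 * C * w p) →
      ∀ p, Integrable (fun q => k p q * φ (f q)) ν := fun hf hf0 hfC p =>
    integrable_kernel_mul_comp (S := Set.univ) hk hk0 hki hφ hφL hL (by simp) hf.aemeasurable
      (.of_forall fun q _ => by rw [abs_of_nonneg (hf0 q)]; exact hfC q)
  let Φ : (P → ℝ) → P → ℝ := fun f p => h p + ∫ q, k p q * φ (f q) ∂ν
  let U : ℕ → P → ℝ := fun n => Φ^[n] 0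
  have hU : ∀ n, U (n + 1) = Φ (U n) := fun n => Function.iterate_succ_apply' _ _ _
  have hw : ∀ p, 0 ≤ C * w p := fun p => (hh0 p).trans (hhC p)
  have hdom : ∀ {f : P → ℝ}, (∀ p, 0 ≤ f p) → (∀ p, f p ≤ 2 * C * w p) →
      ∀ p q, k p q * φ (f q) ≤ L * (2 * C) * (k p q * w q) := fun {f} hf0 hfC p q => by
    calc k p q * φ (f q) ≤ k p q * (L * (2 * C * w q)) := by
          gcongr
          · exact hk0 p q
          · exact (le_abs_self _).trans ((hφL _).trans
              (by rw [abs_of_nonneg (hf0 q)]; gcongr; exact hfC q))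
      _ = _ := by ring
  have key : ∀ n, Measurable (U n) ∧ (∀ p, 0 ≤ U n p) ∧ (∀ p, U n p ≤ 2 * C * w p) := by
    intro n
    induction n with
    | zero => exact ⟨measurable_const, fun p => le_rfl, fun p => by
        have := hw p
        simp only [U, Function.iterate_zero, id, Pi.zero_apply]; linarith⟩
    | succ n ih =>
      obtain ⟨hm, h0, hb⟩ := ih
      rw [hU]
      refine ⟨?_, fun p => ?_, fun p => ?_⟩
      · refine hh.add (StronglyMeasurable.measurable ?_)
        refine StronglyMeasurable.integral_prod_right (f := fun p q => k p q * φ (U n q)) ?_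
        exact (hk.mul (hφ.measurable.comp (hm.comp measurable_snd))).stronglyMeasurable
      · exact add_nonneg (hh0 p) (integral_nonneg fun q => mul_nonneg (hk0 p q) (hφ0 _))
      · have h1 : ∫ q, k p q * φ (U n q) ∂ν ≤ ∫ q, L * (2 * C) * (k p q * w q) ∂ν :=
          integral_mono (hint hm h0 hb p) ((hki p).const_mul _) (hdom h0 hb p)
        rw [integral_const_mul] at h1
        have h2 := mul_le_mul_of_nonneg_left (hkw p) hC
        have h3 := hhC p
        change h p + ∫ q, k p q * φ (U n q) ∂ν ≤ _
        linarith
  have hmono : Monotone U := by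
    refine monotone_nat_of_le_succ fun n => ?_
    induction n with
    | zero => exact fun p => (key 1).2.1 p
    | succ n ih =>
      rw [hU, hU (n + 1)]
      intro p
      refine add_le_add_right (integral_mono ?_ ?_ fun q => ?_) _
      · exact hint (key n).1 (key n).2.1 (key n).2.2 p
      · exact hint (key (n + 1)).1 (key (n + 1)).2.1 (key (n + 1)).2.2 p
      · exact mul_le_mul_of_nonneg_left (hφm (ih q)) (hk0 p q)
  let u : P → ℝ := fun p => ⨆ n, U n p
  have hlim : ∀ p, Tendsto (fun n => U n p) atTop (nhds (u p)) := fun p =>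
    tendsto_atTop_ciSup (fun m n hmn => hmono hmn p)
      ⟨2 * C * w p, by rintro _ ⟨n, rfl⟩; exact (key n).2.2 p⟩
  refine ⟨u, measurable_of_tendsto_metrizable (fun n => (key n).1) (tendsto_pi_nhds.2 hlim),
    fun p => ge_of_tendsto' (hlim p) fun n => (key n).2.1 p,
    fun p => le_of_tendsto' (hlim p) fun n => (key n).2.2 p, fun p => ?_⟩
  refine tendsto_nhds_unique ((tendsto_add_atTop_iff_nat 1).2 (hlim p)) ?_
  simp_rw [hU]
  refine tendsto_const_nhds.add (tendsto_integral_of_dominated_convergence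
    (fun q => L * (2 * C) * (k p q * w q))
    (fun n => (hint (key n).1 (key n).2.1 (key n).2.2 p).1) ((hki p).const_mul _)
    (fun n => .of_forall fun q => ?_) (.of_forall fun q => ?_))
  · rw [Real.norm_of_nonneg (mul_nonneg (hk0 p q) (hφ0 _))]
    exact hdom (key n).2.1 (key n).2.2 p q
  · exact ((hφ.tendsto _).comp (hlim q)).const_mul _

/-- Uniqueness on a set `S` closed under the domain of dependence of the kernel. -/
theorem ae_eq_of_kernel_contraction
    (hk : Measurable (Function.uncurry k))
    (hk0 : ∀ p q, 0 ≤ k p q) (hki : ∀ p, Integrable (fun q => k p q * w q) ν)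
    (hkw : ∀ p, L * ∫ q, k p q * w q ∂ν ≤ w p / 2)
    (hφ : Continuous φ) (hφL : ∀ r, |φ r| ≤ L * |r|)
    (hφLip : ∀ r s, |φ r - φ s| ≤ L * |r - s|) (hL : 0 ≤ L)
    {S : Set P} (hS : ∀ p ∈ S, ∀ q, q ∉ S → k p q = 0) {h u v : P → ℝ}
    (hu : AEMeasurable u ν) (hv : AEMeasurable v ν) {C : ℝ} (hC : 0 ≤ C)
    (huC : ∀ᵐ p ∂ν, p ∈ S → |u p| ≤ C * w p) (hvC : ∀ᵐ p ∂ν, p ∈ S → |v p| ≤ C * w p)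
    (hueq : ∀ᵐ p ∂ν, p ∈ S → u p = h p + ∫ q, k p q * φ (u q) ∂ν)
    (hveq : ∀ᵐ p ∂ν, p ∈ S → v p = h p + ∫ q, k p q * φ (v q) ∂ν) :
    ∀ᵐ p ∂ν, p ∈ S → u p = v p := by
  have key : ∀ n : ℕ, ∀ᵐ p ∂ν, p ∈ S → |u p - v p| ≤ 2 * C * (1 / 2) ^ n * w p := by
    intro n
    induction n with
    | zero =>
      filter_upwards [huC, hvC] with p h1 h2 hp
      have := abs_sub (u p) (v p)
      have := h1 hp
      have := h2 hp
      simp only [pow_zero]; linarith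
    | succ n ih =>
      filter_upwards [hueq, hveq] with p h1 h2 hp
      have hSp := hS p hp
      rw [h1 hp, h2 hp, add_sub_add_left_eq_sub, ← integral_sub
        (integrable_kernel_mul_comp hk hk0 hki hφ hφL hL hSp hu huC)
        (integrable_kernel_mul_comp hk hk0 hki hφ hφL hL hSp hv hvC), ← Real.norm_eq_abs]
      have h3 := norm_integral_le_of_norm_le
        (f := fun q => k p q * φ (u q) - k p q * φ (v q))
        ((hki p).const_mul (L * (2 * C * (1 / 2) ^ n))) (by
        filter_upwards [ih] with q hq
        by_cases hqS : q ∈ S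
        · rw [← mul_sub, Real.norm_eq_abs, abs_mul, abs_of_nonneg (hk0 p q)]
          calc k p q * |φ (u q) - φ (v q)| ≤ k p q * (L * (2 * C * (1 / 2) ^ n * w q)) := by
                gcongr
                · exact hk0 p q
                · exact (hφLip _ _).trans (by gcongr; exact hq hqS)
            _ = _ := by ring
        · simp [hSp q hqS])
      refine h3.trans ?_
      rw [integral_const_mul]
      have h4 := mul_le_mul_of_nonneg_left (hkw p)
        (show 0 ≤ 2 * C * (1 / 2) ^ n by positivity)
      rw [pow_succ]
      linarith
  filter_upwards [ae_all_iff.2 key] with p hp hpS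
  have hlim : Tendsto (fun n : ℕ => 2 * C * (1 / 2 : ℝ) ^ n * w p) atTop (nhds 0) := by
    simpa using ((tendsto_pow_atTop_nhds_zero_of_lt_one (r := (1 / 2 : ℝ)) (by norm_num)
      (by norm_num)).const_mul (2 * C)).mul_const (w p)
  have := ge_of_tendsto' hlim fun n => hp n hpS
  exact sub_eq_zero.1 (abs_eq_zero.1 (le_antisymm this (abs_nonneg _)))

end Abstract

theorem heatKernel_nonneg (N : ℕ) {t : ℝ} (ht : 0 ≤ t) (x : EuclideanSpace ℝ (Fin N)) :
    0 ≤ heatKernel N t x := by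
  unfold heatKernel; positivity

theorem measurable_heatKernel (N : ℕ) : Measurable (Function.uncurry (heatKernel N)) := by
  unfold heatKernel Function.uncurry
  fun_prop

theorem integral_heatKernel (N : ℕ) {t : ℝ} (ht : 0 < t) : ∫ y, heatKernel N t y = 1 := by
  have h := GaussianFourier.integral_rexp_neg_mul_sq_norm (V := EuclideanSpace ℝ (Fin N))
    (show 0 < 1 / (4 * t) by positivity)
  simp only [heatKernel]
  rw [integral_const_mul]
  have h' : ∫ y : EuclideanSpace ℝ (Fin N), rexp (-‖y‖ ^ 2 / (4 * t)) =
      (4 * π * t) ^ ((N : ℝ) / 2) := by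
    convert h using 2
    · ext v; congr 1; field_simp
    · field_simp
    · simp
  rw [h', ← Real.rpow_add (by positivity)]
  simp [neg_div]

theorem integrable_heatKernel (N : ℕ) {t : ℝ} (ht : 0 < t) : Integrable (heatKernel N t) :=
  .of_integral_ne_zero (by rw [integral_heatKernel N ht]; exact one_ne_zero)

theorem heatKernel_le (N : ℕ) {t : ℝ} (ht : 0 < t) (x : EuclideanSpace ℝ (Fin N)) :
    heatKernel N t x ≤ (4 * π * t) ^ (-(N : ℝ) / 2) := by
  unfold heatKernel
  refine mul_le_of_le_one_right (by positivity) (Real.exp_le_one_iff.2 ?_)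
  rw [neg_div]
  exact neg_nonpos.2 (by positivity)

/-- The convolution of the heat kernel with `|y|^{-γ}` is bounded by a multiple of `t^{-γ/2}`. -/
theorem exists_integral_heatKernel_mul_rpow_le (N : ℕ) (hN : 1 ≤ N) {γ : ℝ} (hγ0 : 0 < γ)
    (hγ : γ < N) : ∃ K : ℝ, 0 < K ∧ ∀ (x : EuclideanSpace ℝ (Fin N)) (t : ℝ), 0 < t →
      Integrable (fun y => heatKernel N t (x - y) * ‖y‖ ^ (-γ)) ∧
      ∫ y, heatKernel N t (x - y) * ‖y‖ ^ (-γ) ≤ K * t ^ (-γ / 2) := by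
  let f : EuclideanSpace ℝ (Fin N) → ℝ :=
    (Metric.ball 0 1).indicator fun y => ‖y‖ ^ (-γ)
  have hf0 : ∀ y, 0 ≤ f y := Set.indicator_nonneg fun y _ => by positivity
  have hf : Integrable f := by
    refine (integrable_indicator_iff measurableSet_ball).2 ?_
    refine integrableOn_ball_of_norm_le_rpow (C := 1) (α := γ) (by simpa using hN)
      (by simpa using hγ) (.of_forall fun y => ?_)
      (by fun_prop : Measurable fun y : EuclideanSpace ℝ (Fin N) =>
        ‖y‖ ^ (-γ)).aestronglyMeasurable
    rw [one_mul, Real.norm_of_nonneg (by positivity)]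
  refine ⟨(4 * π) ^ (-(N : ℝ) / 2) * (∫ y, f y) + 1,
    add_pos_of_nonneg_of_pos (mul_nonneg (by positivity) (integral_nonneg hf0)) one_pos,
    fun x t ht => ?_⟩
  have hs : 0 < √t := Real.sqrt_pos.2 ht
  let B : EuclideanSpace ℝ (Fin N) → ℝ := fun y =>
    (4 * π * t) ^ (-(N : ℝ) / 2) * t ^ (-γ / 2) * f ((√t)⁻¹ • y) +
      t ^ (-γ / 2) * heatKernel N t (x - y)
  have hsγ : √t ^ (-γ) = t ^ (-γ / 2) := by
    rw [Real.sqrt_eq_rpow, ← Real.rpow_mul ht.le]; congr 1; ring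
  have hB : Integrable B :=
    ((hf.comp_smul (inv_ne_zero hs.ne')).const_mul _).add
      (((integrable_heatKernel N ht).comp_sub_left x).const_mul _)
  have hle : ∀ y, heatKernel N t (x - y) * ‖y‖ ^ (-γ) ≤ B y := by
    intro y
    have hG := heatKernel_nonneg N ht.le (x - y)
    by_cases hy : ‖y‖ < √t
    · have h1 : f ((√t)⁻¹ • y) = t ^ (γ / 2) * ‖y‖ ^ (-γ) := by
        have hm : (√t)⁻¹ • y ∈ Metric.ball (0 : EuclideanSpace ℝ (Fin N)) 1 := by
          rw [mem_ball_zero_iff, norm_smul, Real.norm_of_nonneg (by positivity),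
            inv_mul_lt_iff₀ hs]
          simpa using hy
        simp only [f, Set.indicator_of_mem hm]
        rw [norm_smul, Real.norm_of_nonneg (by positivity), Real.mul_rpow (by positivity)
          (norm_nonneg _), Real.inv_rpow hs.le, hsγ, ← Real.rpow_neg ht.le]
        congr 2; ring
      have h2 : t ^ (-γ / 2) * t ^ (γ / 2) = 1 := by
        rw [← Real.rpow_add ht]; simp [neg_div]
      simp only [B, h1]
      have h3 : heatKernel N t (x - y) * ‖y‖ ^ (-γ) ≤
          (4 * π * t) ^ (-(N : ℝ) / 2) * ‖y‖ ^ (-γ) := by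
        gcongr; exact heatKernel_le N ht _
      have h4 : 0 ≤ t ^ (-γ / 2) * heatKernel N t (x - y) := by positivity
      calc _ ≤ (4 * π * t) ^ (-(N : ℝ) / 2) * ‖y‖ ^ (-γ) := h3
        _ = (4 * π * t) ^ (-(N : ℝ) / 2) * (t ^ (-γ / 2) * t ^ (γ / 2)) * ‖y‖ ^ (-γ) := by
          rw [h2, mul_one]
        _ ≤ _ := by linarith
    · have h1 : ‖y‖ ^ (-γ) ≤ t ^ (-γ / 2) := by
        rw [← hsγ]
        exact Real.rpow_le_rpow_of_nonpos hs (not_lt.1 hy) (by linarith)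
      have h2 : 0 ≤ (4 * π * t) ^ (-(N : ℝ) / 2) * t ^ (-γ / 2) * f ((√t)⁻¹ • y) :=
        mul_nonneg (by positivity) (hf0 _)
      have h3 := mul_le_mul_of_nonneg_left h1 hG
      simp only [B]
      linarith
  have hG : Measurable fun y => heatKernel N t (x - y) :=
    (measurable_heatKernel N).comp (measurable_const.prodMk (measurable_const.sub measurable_id))
  have hint : Integrable (fun y => heatKernel N t (x - y) * ‖y‖ ^ (-γ)) := by
    refine hB.mono' ?_ (.of_forall fun y => ?_)
    · exact (hG.mul (measurable_norm.pow_const _)).aestronglyMeasurable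
    · rw [Real.norm_of_nonneg (mul_nonneg (heatKernel_nonneg N ht.le _) (by positivity))]
      exact hle y
  refine ⟨hint, (integral_mono hint hB hle).trans_eq ?_⟩
  have hsN : √t ^ N = t ^ ((N : ℝ) / 2) := by
    rw [Real.sqrt_eq_rpow, ← Real.rpow_natCast, ← Real.rpow_mul ht.le]; congr 1; ring
  have h1 : t ^ (-(N : ℝ) / 2) * t ^ ((N : ℝ) / 2) = 1 := by
    rw [← Real.rpow_add ht]; simp [neg_div]
  simp only [B]
  rw [integral_add ((hf.comp_smul (inv_ne_zero hs.ne')).const_mul _)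
    (((integrable_heatKernel N ht).comp_sub_left x).const_mul _), integral_const_mul,
    integral_const_mul, integral_sub_left_eq_self (heatKernel N t), integral_heatKernel N ht,
    Measure.integral_comp_inv_smul_of_nonneg _ _ hs.le, finrank_euclideanSpace_fin, smul_eq_mul,
    hsN, Real.mul_rpow (by positivity) ht.le]
  linear_combination ((4 * π) ^ (-(N : ℝ) / 2) * t ^ (-γ / 2) * ∫ y, f y) * h1

/-- The space-time kernel of the Duhamel term with weight `|y|^{-γ}`. -/
noncomputable def duhamelKernel (N : ℕ) (γ : ℝ) (p q : EuclideanSpace ℝ (Fin N) × ℝ) : ℝ :=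
  if q.2 ∈ Set.Ioo 0 p.2 then heatKernel N (p.2 - q.2) (p.1 - q.1) * ‖q.1‖ ^ (-γ) else 0

theorem duhamelKernel_nonneg (N : ℕ) (γ : ℝ) (p q : EuclideanSpace ℝ (Fin N) × ℝ) :
    0 ≤ duhamelKernel N γ p q := by
  unfold duhamelKernel
  split_ifs with h
  · exact mul_nonneg (heatKernel_nonneg N (sub_nonneg.2 h.2.le) _) (by positivity)
  · exact le_rfl

theorem measurable_duhamelKernel (N : ℕ) (γ : ℝ) :
    Measurable (Function.uncurry (duhamelKernel N γ)) := by
  unfold duhamelKernel Function.uncurry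
  refine Measurable.ite ?_ (Measurable.mul ?_ (by fun_prop)) measurable_const
  · exact (measurableSet_lt measurable_const (measurable_snd.comp measurable_snd)).inter
      (measurableSet_lt (measurable_snd.comp measurable_snd) (measurable_snd.comp measurable_fst))
  · exact (measurable_heatKernel N).comp
      (g := Function.uncurry (heatKernel N)) (f := fun a :
        (EuclideanSpace ℝ (Fin N) × ℝ) × EuclideanSpace ℝ (Fin N) × ℝ =>
        (a.1.2 - a.2.2, a.1.1 - a.2.1)) (by fun_prop)

/-- For a large rate `l`, the Duhamel kernel contracts the supremum norm weighted by `e^{lt}`. -/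
theorem exists_duhamelKernel_contraction (N : ℕ) (hN : 1 ≤ N) {γ : ℝ} (hγ0 : 0 < γ)
    (hγ2 : γ < 2) (hγN : γ < N) {L : ℝ} (hL : 0 < L) :
    ∃ l : ℝ, 0 < l ∧ ∀ p,
      Integrable (fun q => duhamelKernel N γ p q * rexp (l * q.2)) ∧
      L * ∫ q, duhamelKernel N γ p q * rexp (l * q.2) ≤ rexp (l * p.2) / 2 := by
  obtain ⟨K, hK, hKb⟩ := exists_integral_heatKernel_mul_rpow_le N hN hγ0 hγN
  let a := 1 - γ / 2
  have ha : 0 < a := by simp only [a]; linarith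
  have hΓ := Real.Gamma_pos_of_pos ha
  let c := 2 * L * K * Real.Gamma a
  have hc : 0 < c := by positivity
  let l := c ^ (1 / a)
  have hl : 0 < l := by positivity
  let ψ : ℝ → ℝ := (Set.Ioi 0).indicator fun s => s ^ (a - 1) * rexp (-(l * s))
  have hψ0 : ∀ s, 0 ≤ ψ s := Set.indicator_nonneg fun s hs => by
    have : (0 : ℝ) < s := hs
    positivity
  have hψint : ∫ s, ψ s = 1 / c * Real.Gamma a := by
    rw [integral_indicator measurableSet_Ioi, Real.integral_rpow_mul_exp_neg_mul_Ioi ha hl]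
    congr 1
    simp only [l]
    rw [Real.div_rpow one_pos.le (by positivity), ← Real.rpow_mul hc.le, one_div_mul_cancel ha.ne']
    simp
  have hψ : Integrable ψ := .of_integral_ne_zero (by rw [hψint]; positivity)
  refine ⟨l, hl, fun p => ?_⟩
  obtain ⟨x, t⟩ := p
  let B : ℝ → ℝ := fun s => K * rexp (l * t) * ψ (t - s)
  have hB : Integrable B := (hψ.comp_sub_left t).const_mul _
  let F : EuclideanSpace ℝ (Fin N) × ℝ → ℝ :=
    fun q => duhamelKernel N γ (x, t) q * rexp (l * q.2)
  have hF0 : ∀ q, 0 ≤ F q := fun q => mul_nonneg (duhamelKernel_nonneg N γ _ q) (exp_pos _).le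
  have hFm : Measurable F :=
    ((measurable_duhamelKernel N γ).comp measurable_prodMk_left).mul (by fun_prop)
  have hsec : ∀ s, Integrable (fun y => F (y, s)) ∧ ∫ y, F (y, s) ≤ B s := by
    intro s
    by_cases hs : s ∈ Set.Ioo 0 t
    · have hts : 0 < t - s := sub_pos.2 hs.2
      obtain ⟨h1, h2⟩ := hKb x (t - s) hts
      have hF : ∀ y, F (y, s) =
          heatKernel N (t - s) (x - y) * ‖y‖ ^ (-γ) * rexp (l * s) := fun y => by
        simp only [F, duhamelKernel, if_pos hs]
      simp only [hF]
      refine ⟨h1.mul_const _, ?_⟩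
      rw [integral_mul_const]
      have h3 : B s = K * (t - s) ^ (-γ / 2) * rexp (l * s) := by
        simp only [B, ψ]
        rw [Set.indicator_of_mem (Set.mem_Ioi.2 hts),
          show l * s = l * t + -(l * (t - s)) by ring, Real.exp_add,
          show a - 1 = -γ / 2 by simp only [a]; ring]
        ring
      rw [h3]
      gcongr
    · have hF : ∀ y, F (y, s) = 0 := fun y => by
        simp only [F, duhamelKernel, if_neg hs, zero_mul]
      simp only [hF]
      refine ⟨integrable_zero _ _ _, ?_⟩
      rw [integral_zero]
      exact mul_nonneg (by positivity) (hψ0 _)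
  have hFint : Integrable F := by
    rw [Measure.volume_eq_prod, integrable_prod_iff' hFm.aestronglyMeasurable]
    refine ⟨.of_forall fun s => (hsec s).1, hB.mono' ?_ (.of_forall fun s => ?_)⟩
    · exact (StronglyMeasurable.integral_prod_left'
        hFm.norm.stronglyMeasurable).aestronglyMeasurable
    · simp only [Real.norm_of_nonneg (hF0 _)]
      rw [Real.norm_of_nonneg (integral_nonneg fun y => hF0 _)]
      exact (hsec s).2
  refine ⟨hFint, ?_⟩
  have h1 : ∫ q, F q ≤ ∫ s, B s := by
    rw [Measure.volume_eq_prod, integral_prod_symm _ (by rwa [← Measure.volume_eq_prod])]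
    refine integral_mono ?_ hB fun s => (hsec s).2
    rw [Measure.volume_eq_prod] at hFint
    exact hFint.integral_prod_right
  have h2 : ∫ s, B s = K * rexp (l * t) * (1 / c * Real.Gamma a) := by
    simp only [B]
    rw [integral_const_mul, integral_sub_left_eq_self ψ, hψint]
  calc L * ∫ q, F q ≤ L * (K * rexp (l * t) * (1 / c * Real.Gamma a)) := by
        rw [← h2]; gcongr
    _ = rexp (l * t) / 2 := by simp only [c]; field_simp

/-- The Duhamel term as an iterated integral. -/
theorem integral_duhamelKernel_mul {N : ℕ} {γ : ℝ} {f : EuclideanSpace ℝ (Fin N) × ℝ → ℝ}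
    {x : EuclideanSpace ℝ (Fin N)} {t : ℝ} (ht : 0 ≤ t)
    (hf : Integrable fun q => duhamelKernel N γ (x, t) q * f q) :
    ∫ q, duhamelKernel N γ (x, t) q * f q =
      ∫ s in (0 : ℝ)..t, ∫ y, heatKernel N (t - s) (x - y) * ‖y‖ ^ (-γ) * f (y, s) := by
  rw [Measure.volume_eq_prod] at hf ⊢
  rw [integral_prod_symm _ hf, intervalIntegral.integral_of_le ht,
    integral_Ioc_eq_integral_Ioo, ← integral_indicator measurableSet_Ioo]
  congr 1
  ext s
  by_cases hs : s ∈ Set.Ioo 0 t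
  · rw [Set.indicator_of_mem hs]
    simp only [duhamelKernel, if_pos hs]
  · rw [Set.indicator_of_notMem hs]
    simp only [duhamelKernel, if_neg hs, zero_mul, integral_zero]

theorem measurable_heatFlow (N : ℕ) {f : EuclideanSpace ℝ (Fin N) → ℝ} (hf : AEMeasurable f) :
    Measurable fun p : EuclideanSpace ℝ (Fin N) × ℝ =>
      ∫ y, heatKernel N p.2 (p.1 - y) * f y := by
  have h : (fun p : EuclideanSpace ℝ (Fin N) × ℝ => ∫ y, heatKernel N p.2 (p.1 - y) * f y) =
      fun p => ∫ y, heatKernel N p.2 (p.1 - y) * hf.mk f y := by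
    ext p
    refine integral_congr_ae ?_
    filter_upwards [hf.ae_eq_mk] with y hy
    rw [hy]
  rw [h]
  refine (StronglyMeasurable.integral_prod_right (f := fun (p : EuclideanSpace ℝ (Fin N) × ℝ) y =>
    heatKernel N p.2 (p.1 - y) * hf.mk f y) (Measurable.stronglyMeasurable ?_)).measurable
  refine Measurable.mul ?_ (hf.measurable_mk.comp measurable_snd)
  exact (measurable_heatKernel N).comp (g := Function.uncurry (heatKernel N))
    (f := fun a : (EuclideanSpace ℝ (Fin N) × ℝ) × EuclideanSpace ℝ (Fin N) =>
      (a.1.2, a.1.1 - a.2)) (by fun_prop)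

theorem heatFlow_nonneg {N : ℕ} {f : EuclideanSpace ℝ (Fin N) → ℝ} (hf : ∀ᵐ y, 0 ≤ f y)
    {t : ℝ} (ht : 0 ≤ t) (x : EuclideanSpace ℝ (Fin N)) :
    0 ≤ ∫ y, heatKernel N t (x - y) * f y := by
  refine integral_nonneg_of_ae ?_
  filter_upwards [hf] with y hy
  exact mul_nonneg (heatKernel_nonneg N ht _) hy

theorem heatFlow_le {N : ℕ} {f : EuclideanSpace ℝ (Fin N) → ℝ} {C : ℝ} (hf : ∀ᵐ y, |f y| ≤ C)
    {t : ℝ} (ht : 0 < t) (x : EuclideanSpace ℝ (Fin N)) :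
    ∫ y, heatKernel N t (x - y) * f y ≤ C := by
  have h := norm_integral_le_of_norm_le (f := fun y => heatKernel N t (x - y) * f y)
    (((integrable_heatKernel N ht).comp_sub_left x).mul_const C) (by
      filter_upwards [hf] with y hy
      rw [norm_mul, Real.norm_of_nonneg (heatKernel_nonneg N ht.le _)]
      exact mul_le_mul_of_nonneg_left hy (heatKernel_nonneg N ht.le _))
  rw [integral_mul_const, integral_sub_left_eq_self (heatKernel N t), integral_heatKernel N ht,
    one_mul] at h
  exact (le_abs_self _).trans h

/-- For `0 < γ < min{2,N}`, a non-decreasing Lipschitz nonlinearity `g` with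
`g(0) = 0`, and non-negative essentially bounded measurable initial data
`u₀`, the problem `u_t - Δu = |x|^{-γ} g(u)`, `u(·,0) = u₀` has a unique
(up to a.e. equality) non-negative global mild solution. -/
theorem lipschitz_existence_uniqueness (N : ℕ) (hN : 1 ≤ N) (γ : ℝ)
    (hγ0 : 0 < γ) (hγ : γ < min 2 (N : ℝ))
    (g : ℝ → ℝ)
    (hgnn : ∀ r : ℝ, 0 ≤ r → 0 ≤ g r)
    (hgmono : ∀ r s : ℝ, 0 ≤ r → r ≤ s → g r ≤ g s)
    (L : ℝ) (hL : 0 < L)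
    (hglip : ∀ r s : ℝ, 0 ≤ r → 0 ≤ s → |g r - g s| ≤ L * |r - s|)
    (hg0 : g 0 = 0)
    (u₀ : EuclideanSpace ℝ (Fin N) → ℝ)
    (hu₀m : AEMeasurable u₀)
    (hu₀nn : ∀ᵐ x ∂volume, 0 ≤ u₀ x)
    (hu₀b : ∃ C : ℝ, ∀ᵐ x ∂volume, |u₀ x| ≤ C) :
    ∃ u : EuclideanSpace ℝ (Fin N) → ℝ → ℝ,
      IsLipSolution N γ g u₀ u ∧
      ∀ v : EuclideanSpace ℝ (Fin N) → ℝ → ℝ, IsLipSolution N γ g u₀ v →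
        ∀ᵐ p : EuclideanSpace ℝ (Fin N) × ℝ ∂volume,
          0 < p.2 → u p.1 p.2 = v p.1 p.2 := by
  obtain ⟨C, hC⟩ := hu₀b
  have hC0 : 0 ≤ C := by
    obtain ⟨x, hx⟩ := hC.exists
    exact (abs_nonneg _).trans hx
  obtain ⟨l, hl, hlb⟩ := exists_duhamelKernel_contraction N hN hγ0
    (hγ.trans_le (min_le_left _ _)) (hγ.trans_le (min_le_right _ _)) hL
  let φ : ℝ → ℝ := fun r => g (max r 0)
  have hφeq : ∀ r, 0 ≤ r → φ r = g r := fun r hr => by simp only [φ, max_eq_left hr]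
  have hφ0 : ∀ r, 0 ≤ φ r := fun r => hgnn _ (le_max_right _ _)
  have hφm : Monotone φ := fun r s hrs =>
    hgmono _ _ (le_max_right _ _) (max_le_max_right 0 hrs)
  have hφLip : ∀ r s, |φ r - φ s| ≤ L * |r - s| := fun r s =>
    (hglip _ _ (le_max_right _ _) (le_max_right _ _)).trans
      (mul_le_mul_of_nonneg_left (abs_max_sub_max_le_abs r s 0) hL.le)
  have hφL : ∀ r, |φ r| ≤ L * |r| := fun r => by
    simpa [hφeq 0 le_rfl, hg0] using hφLip r 0
  have hφ : Continuous φ := (LipschitzWith.of_dist_le_mul (K := L.toNNReal) fun r s => by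
    simpa [Real.dist_eq, hL.le] using hφLip r s).continuous
  let h : EuclideanSpace ℝ (Fin N) × ℝ → ℝ := fun p =>
    if 0 < p.2 then ∫ y, heatKernel N p.2 (p.1 - y) * u₀ y else 0
  have hh : Measurable h :=
    Measurable.ite (measurableSet_lt measurable_const measurable_snd)
      (measurable_heatFlow N hu₀m) measurable_const
  have hh0 : ∀ p, 0 ≤ h p := fun p => by
    simp only [h]
    split_ifs with hp
    · exact heatFlow_nonneg hu₀nn hp.le _
    · exact le_rfl
  have hhC : ∀ p, h p ≤ C * rexp (l * p.2) := fun p => by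
    simp only [h]
    split_ifs with hp
    · exact (heatFlow_le hC hp _).trans
        (le_mul_of_one_le_right hC0 (Real.one_le_exp (by positivity)))
    · positivity
  have hk := measurable_duhamelKernel N γ
  have hk0 := duhamelKernel_nonneg N γ
  have hki := fun p => (hlb p).1
  have hkw := fun p => (hlb p).2
  have hS : ∀ {T : ℝ}, ∀ p ∈ {p : EuclideanSpace ℝ (Fin N) × ℝ | p.2 ∈ Set.Ioo 0 T},
      ∀ q, q ∉ {p : EuclideanSpace ℝ (Fin N) × ℝ | p.2 ∈ Set.Ioo 0 T} →
        duhamelKernel N γ p q = 0 := fun p hp q hq => by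
    refine if_neg fun hqp => hq ⟨hqp.1, hqp.2.trans hp.2⟩
  have hconv : ∀ {v : EuclideanSpace ℝ (Fin N) × ℝ → ℝ}, (∀ x t, 0 ≤ t → 0 ≤ v (x, t)) →
      ∀ {x : EuclideanSpace ℝ (Fin N)} {t : ℝ}, 0 < t →
      Integrable (fun q => duhamelKernel N γ (x, t) q * φ (v q)) →
      h (x, t) + ∫ q, duhamelKernel N γ (x, t) q * φ (v q) =
        (∫ y, heatKernel N t (x - y) * u₀ y) + ∫ σ in (0 : ℝ)..t, ∫ y,
          heatKernel N (t - σ) (x - y) * ‖y‖ ^ (-γ) * g (v (y, σ)) := by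
    intro v hv x t ht hint
    rw [integral_duhamelKernel_mul ht.le hint]
    simp only [h, if_pos ht]
    congr 1
    refine intervalIntegral.integral_congr fun σ hσ => ?_
    rw [Set.uIcc_of_le ht.le] at hσ
    simp only [hφeq _ (hv _ σ hσ.1)]
  obtain ⟨u, hum, hu0, huC, hueq⟩ := exists_solution_of_kernel_contraction hk hk0 hki hkw hφ hφ0
    hφm hφL hL.le hh hh0 hC0 hhC
  have huabs : ∀ T : ℝ, ∀ p : EuclideanSpace ℝ (Fin N) × ℝ, p.2 ∈ Set.Ioo 0 T →
      |u p| ≤ 2 * C * rexp (l * T) := fun T p hp => by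
    rw [abs_of_nonneg (hu0 p)]
    refine (huC p).trans ?_
    have := hp.2
    gcongr
  refine ⟨fun x t => u (x, t), ⟨fun x t _ => hu0 _, hum.aemeasurable, fun T _ =>
    ⟨2 * C * rexp (l * T), .of_forall fun p hp => huabs T p hp⟩, fun T _ =>
    .of_forall fun p hp => ?_⟩, ?_⟩
  · rw [← hconv (fun x t _ => hu0 (x, t)) hp.1]
    · exact hueq p
    · exact integrable_kernel_mul_comp (S := Set.univ) hk hk0 hki hφ hφL hL.le (by simp)
        hum.aemeasurable (.of_forall fun q _ => by rw [abs_of_nonneg (hu0 q)]; exact huC q)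
  · rintro v ⟨hv0, hvm, hvb, hveq⟩
    have key : ∀ n : ℕ, ∀ᵐ p : EuclideanSpace ℝ (Fin N) × ℝ,
        p.2 ∈ Set.Ioo (0 : ℝ) (n + 1) → u p = v p.1 p.2 := by
      intro n
      have hT : (0 : ℝ) < n + 1 := by positivity
      obtain ⟨D, hD⟩ := hvb (n + 1) hT
      have hvD : ∀ᵐ p : EuclideanSpace ℝ (Fin N) × ℝ, p.2 ∈ Set.Ioo (0 : ℝ) (n + 1) →
          |v p.1 p.2| ≤ max (2 * C) D * rexp (l * p.2) := by
        filter_upwards [hD] with p hp hpT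
        have hpos := hpT.1
        refine (hp hpT).trans ((le_max_right _ _).trans
          (le_mul_of_one_le_right (le_max_of_le_left (by positivity)) (Real.one_le_exp ?_)))
        positivity
      refine ae_eq_of_kernel_contraction hk hk0 hki hkw hφ hφL hφLip hL.le
        (S := {p | p.2 ∈ Set.Ioo (0 : ℝ) (n + 1)}) hS (h := h) (C := max (2 * C) D)
        hum.aemeasurable hvm (le_max_of_le_left (by positivity))
        (.of_forall fun p _ => ?_) hvD (.of_forall fun p _ => hueq p) ?_
      · rw [abs_of_nonneg (hu0 p)]
        exact (huC p).trans (by gcongr; exact le_max_left _ _)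
      · filter_upwards [hveq (n + 1) hT] with p hp hpT
        rw [hp ⟨hpT.1, hpT.2.le⟩]
        refine (hconv (v := fun q => v q.1 q.2) hv0 hpT.1 ?_).symm
        exact integrable_kernel_mul_comp hk hk0 hki hφ hφL hL.le (hS p hpT) hvm hvD
    filter_upwards [ae_all_iff.2 key] with p hp hpos
    obtain ⟨n, hn⟩ := exists_nat_gt p.2
    exact hp n ⟨hpos, hn.trans (lt_add_one _)⟩
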